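/- Let G be a signed orientable ribbon graph. Then for all positive real numbers x, y, z satisfying xyz² = 1, one has (yz)^{v(G)} · R_s(G; x, y, z) = (yz)^{∂(G)} · R_s(G^{E(G)}; x, y, z), where G^{E(G)} is the partial dual of G with respect to all of its edges (the dual ribbon graph of G with all edge signs reversed) and ∂(G) = ∂(E(G)) is the number of boundary components of G. -/

import Mathlib

/-! Match the state `F` of `G` with the complementary state `Fᶜ` of the full dual `G*`. Since
`α ∘ α_{Fᶜ} = α_F`, matching states have the same boundary components (`bC_pdPerm_compl`); in
particular `v(G*) = ∂(G)`. The groups `⟨σ, α⟩` and `⟨σα, α⟩` coincide, so `k(G*) = k(G)`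
(`kC_pdPerm_univ`).

The number of components `k(F)` enters the summand of `F` exactly as `(x y z²)^{k(F)} = 1`, so it
plays no role, and `(yz)^{v(G)}` times the summand is
`x^{s(F) - k(G)} y^{|F| - s(F)} z^{|F| - ∂(F)}` (`weighted_summand`). Reversing all signs gives
`s*(Fᶜ) = s(F) + δ` with `δ = (|Fᶜ| - |F|) / 2` (`sC_pdSign_compl`), so the corresponding
expression for `Fᶜ` in `G*` differs from the one for `F` by the factor `(x y z²)^δ = 1`. -/

open Finset

noncomputable section

/-- A signed orientable ribbon graph (combinatorial map) is encoded with dart set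
`E × Bool` (each edge `e : E` carries the two darts `(e, false)` and `(e, true)`),
a permutation `σ` of the darts recording the cyclic order of darts around the
vertices, the fixed-point-free involution `α = edgeInv Finset.univ` pairing the two
darts of each edge, and a sign function `ε : E → ℤ` (with values `1` or `-1`).

`edgeInv A` is the involution `α_A` agreeing with `α` on the darts of edges in `A`
and fixing all other darts. -/
def edgeInv {E : Type*} [DecidableEq E] (A : Finset E) : Equiv.Perm (E × Bool) :=
  Function.Involutive.toPerm (fun d => if d.1 ∈ A then (d.1, !d.2) else d)
    (by intro d; by_cases h : d.1 ∈ A <;> simp [h])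

/-- The number of orbits on `D` of the subgroup generated by a set of permutations. -/
def orbitCount {D : Type*} [Fintype D] (S : Set (Equiv.Perm D)) : ℕ :=
  Nat.card (MulAction.orbitRel.Quotient (Subgroup.closure S) D)

variable {E : Type*} [Fintype E] [DecidableEq E]

/-- `v(G)`: the number of cycles of `σ` (vertices of the ribbon graph). -/
def vG (σ : Equiv.Perm (E × Bool)) : ℕ := orbitCount {σ}

/-- `e(G)`: the number of edges (`α`-orbits of darts). -/
def eG (_σ : Equiv.Perm (E × Bool)) : ℕ := Fintype.card E

/-- `k(F)`: the number of orbits of the subgroup generated by `σ` and `α_F`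
(connected components of the spanning ribbon subgraph with edge set `F`). -/
def kC (σ : Equiv.Perm (E × Bool)) (F : Finset E) : ℕ := orbitCount {σ, edgeInv F}

/-- `∂(F)`: the number of cycles of `σ ∘ α_F` (boundary components of the spanning
ribbon subgraph with edge set `F`). -/
def bC (σ : Equiv.Perm (E × Bool)) (F : Finset E) : ℕ := orbitCount {σ * edgeInv F}

/-- `e₋(F)`: the number of negative edges in `F`. -/
def eNeg (ε : E → ℤ) (F : Finset E) : ℕ := (F.filter fun e => ε e = -1).card

/-- `e₊(F)`: the number of positive edges in `F`. -/
def ePos (ε : E → ℤ) (F : Finset E) : ℕ := (F.filter fun e => ε e = 1).card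

/-- `r(F) = v(G) − k(F)`, as a real number. -/
def rC (σ : Equiv.Perm (E × Bool)) (F : Finset E) : ℝ := (vG σ : ℝ) - (kC σ F : ℝ)

/-- `n(F) = e(F) − r(F)`, as a real number. -/
def nC (σ : Equiv.Perm (E × Bool)) (F : Finset E) : ℝ := (F.card : ℝ) - rC σ F

/-- The sign function of a state: `s(F) = ½(e₋(F) − e₋(E(G)∖F))`. -/
def sC (ε : E → ℤ) (F : Finset E) : ℝ :=
  ((eNeg ε F : ℝ) - (eNeg ε (Finset.univ \ F) : ℝ)) / 2

/-- The signed ribbon graph polynomial `R_s(G; x, y, z)` (real exponents via `rpow`). -/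
def Rs (σ : Equiv.Perm (E × Bool)) (ε : E → ℤ) (x y z : ℝ) : ℝ :=
  ∑ F : Finset E,
    x ^ (rC σ Finset.univ - rC σ F + sC ε F) * y ^ (nC σ F - sC ε F) *
      z ^ ((kC σ F : ℝ) - (bC σ F : ℝ) + nC σ F)

/-- The vertex permutation `σ ∘ α_A` of the partial dual `G^A`. -/
def pdPerm (σ : Equiv.Perm (E × Bool)) (A : Finset E) : Equiv.Perm (E × Bool) :=
  σ * edgeInv A

/-- The sign function of the partial dual `G^A`: signs of edges in `A` are reversed. -/
def pdSign (ε : E → ℤ) (A : Finset E) : E → ℤ := fun e => if e ∈ A then -ε e else ε e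
lemma orbitCount_congr {D : Type*} [Fintype D] {S T : Set (Equiv.Perm D)}
    (h : Subgroup.closure S = Subgroup.closure T) : orbitCount S = orbitCount T := by
  unfold orbitCount
  rw [h]

lemma edgeInv_univ_mul_compl (F : Finset E) :
    edgeInv (univ : Finset E) * edgeInv Fᶜ = edgeInv F := by
  ext1 ⟨e, b⟩
  by_cases h : e ∈ F <;> simp [edgeInv, Function.Involutive.toPerm, h]

lemma bC_pdPerm_compl (σ : Equiv.Perm (E × Bool)) (F : Finset E) :
    bC (pdPerm σ univ) Fᶜ = bC σ F := by
  unfold bC pdPerm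
  rw [mul_assoc, edgeInv_univ_mul_compl]

lemma kC_pdPerm_univ (σ : Equiv.Perm (E × Bool)) :
    kC (pdPerm σ univ) univ = kC σ univ := by
  unfold kC pdPerm
  apply orbitCount_congr
  set α := edgeInv (univ : Finset E)
  apply le_antisymm <;> rw [Subgroup.closure_le] <;> rintro g (rfl | rfl)
  · exact mul_mem (Subgroup.subset_closure (by simp)) (Subgroup.subset_closure (by simp))
  · exact Subgroup.subset_closure (by simp)
  · have h : g * α * α⁻¹ ∈ Subgroup.closure {g * α, α} :=
      mul_mem (Subgroup.subset_closure (by simp)) (inv_mem (Subgroup.subset_closure (by simp)))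
    simpa using h
  · exact Subgroup.subset_closure (by simp)

/-- Reversing all signs turns the negative edges of a state into its positive ones. -/
lemma eNeg_pdSign_add (ε : E → ℤ) (hε : ∀ e, ε e = 1 ∨ ε e = -1) (F : Finset E) :
    eNeg (pdSign ε univ) F + eNeg ε F = F.card := by
  unfold eNeg pdSign
  rw [← card_filter_add_card_filter_not (s := F) (fun e => ε e = -1), add_comm]
  congr 2
  apply filter_congr
  intro e _
  rcases hε e with h | h <;> simp [h]

lemma sC_pdSign_compl (ε : E → ℤ) (hε : ∀ e, ε e = 1 ∨ ε e = -1) (F : Finset E) :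
    sC (pdSign ε univ) Fᶜ = sC ε F + ((Fᶜ.card : ℝ) - F.card) / 2 := by
  have h1 : (eNeg (pdSign ε univ) F : ℝ) + eNeg ε F = F.card := by
    exact_mod_cast eNeg_pdSign_add ε hε F
  have h2 : (eNeg (pdSign ε univ) Fᶜ : ℝ) + eNeg ε Fᶜ = Fᶜ.card := by
    exact_mod_cast eNeg_pdSign_add ε hε Fᶜ
  unfold sC
  rw [← compl_eq_univ_sdiff, ← compl_eq_univ_sdiff, compl_compl]
  linarith

/-- On the surface `x y z² = 1`, the summand of `F` multiplied by `(yz)^{v(G)}` is free of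
`k(F)` and of `v(G)`. -/
lemma weighted_summand (σ : Equiv.Perm (E × Bool)) (ε : E → ℤ) (F : Finset E) {x y z : ℝ}
    (hx : 0 < x) (hy : 0 < y) (hz : 0 < z)
    (hlog : Real.log x + Real.log y + 2 * Real.log z = 0) :
    (y * z) ^ vG σ *
        (x ^ (rC σ univ - rC σ F + sC ε F) * y ^ (nC σ F - sC ε F) *
          z ^ ((kC σ F : ℝ) - (bC σ F : ℝ) + nC σ F)) =
      x ^ (sC ε F - kC σ univ) * y ^ ((F.card : ℝ) - sC ε F) *
        z ^ ((F.card : ℝ) - bC σ F) := by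
  rw [← Real.rpow_natCast, Real.mul_rpow hy.le hz.le]
  simp only [Real.rpow_def_of_pos hx, Real.rpow_def_of_pos hy, Real.rpow_def_of_pos hz,
    ← Real.exp_add]
  congr 1
  unfold nC rC
  linear_combination (kC σ F : ℝ) * hlog

/-- Duality for the full dual: for a signed orientable ribbon graph `G` and all
positive reals `x, y, z` with `xyz² = 1`,
`(yz)^{v(G)} · R_s(G; x,y,z) = (yz)^{∂(G)} · R_s(G^{E(G)}; x,y,z)`,
where `G^{E(G)}` is the partial dual with respect to all edges and
`∂(G) = ∂(E(G))` is the number of boundary components of `G`. -/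
theorem full_duality (E : Type*) [Fintype E] [DecidableEq E]
    (σ : Equiv.Perm (E × Bool)) (ε : E → ℤ) (hε : ∀ e, ε e = 1 ∨ ε e = -1)
    (x y z : ℝ) (hx : 0 < x) (hy : 0 < y) (hz : 0 < z)
    (hxyz : x * y * z ^ 2 = 1) :
    (y * z) ^ vG σ * Rs σ ε x y z =
      (y * z) ^ bC σ Finset.univ *
        Rs (pdPerm σ Finset.univ) (pdSign ε Finset.univ) x y z := by
  have hlog : Real.log x + Real.log y + 2 * Real.log z = 0 := by
    have h := congrArg Real.log hxyz
    rw [Real.log_mul (by positivity) (by positivity), Real.log_mul hx.ne' hy.ne',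
      Real.log_pow, Real.log_one] at h
    exact_mod_cast h
  have hv : bC σ univ = vG (pdPerm σ univ) := rfl
  rw [hv]
  unfold Rs
  rw [mul_sum, mul_sum]
  refine Fintype.sum_equiv (Equiv.ofBijective _ compl_bijective) _ _ fun F => ?_
  rw [Equiv.ofBijective_apply, weighted_summand σ ε F hx hy hz hlog,
    weighted_summand (pdPerm σ univ) (pdSign ε univ) Fᶜ hx hy hz hlog,
    bC_pdPerm_compl, kC_pdPerm_univ, sC_pdSign_compl ε hε]
  simp only [Real.rpow_def_of_pos hx, Real.rpow_def_of_pos hy, Real.rpow_def_of_pos hz,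
    ← Real.exp_add]
  congr 1
  linear_combination (((F.card : ℝ) - Fᶜ.card) / 2) * hlog

end
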